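/- Let Γ be a distance-regular graph with diameter D ≥ 2, valency k and intersection numbers a_1, c_2, and let t ≥ 3 be an integer. If Γ contains a t-claw but no (t+1)-claws, then t(t−1)(c_2 − 1) ≥ 2(t(a_1+1) − k); equivalently, c_2 ≥ 1 + 2(t − k/(a_1+1))(a_1+1)/(t(t−1)). -/

import Mathlib

/-!
Let `x` be the centre of a `t`-claw with leaves `s`. For a leaf `y`, let `A y` be the closed
neighbourhood of `y` inside the neighbourhood `N(x)`. Then `A y` has `a₁ + 1` elements
(`card_closedNbrs`), and two distinct sets `A y`, `A z` share at most `c₂ - 1` elements, since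
`y`, `z` are at distance two and have `x` as a further common neighbour (`card_inter_closedNbrs`).
All these sets lie in `N(x)`, which has `k` elements, so the Bonferroni inequality
(`bonferroni_two`) gives `k ≥ t (a₁ + 1) - (t choose 2) (c₂ - 1)`.
-/

open SimpleGraph Finset

/-- `G` is a distance-regular graph with diameter `D` and intersection numbers
`b i` (number of neighbours of `y` at distance `i+1` from `x` when `dist x y = i`) and
`c i` (number of neighbours of `y` at distance `i-1` from `x` when `dist x y = i`). -/
def IsDRG {V : Type*} [Fintype V] (G : SimpleGraph V) (D : ℕ) (b c : ℕ → ℕ) : Prop :=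
  G.Connected ∧
  (∃ x y : V, G.dist x y = D) ∧
  (∀ x y : V, G.dist x y ≤ D) ∧
  c 0 = 0 ∧ c 1 = 1 ∧ b D = 0 ∧
  (∀ i ≤ D, ∀ x y : V, G.dist x y = i →
    {z : V | G.Adj y z ∧ G.dist x z = i - 1}.ncard = c i ∧
    {z : V | G.Adj y z ∧ G.dist x z = i + 1}.ncard = b i)

/-- `G` contains a `t`-claw: a vertex together with `t` pairwise nonadjacent neighbours
(an induced `K_{1,t}`). -/
def HasClaw {V : Type*} (G : SimpleGraph V) (t : ℕ) : Prop :=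
  ∃ (x : V) (s : Finset V), s.card = t ∧ (∀ y ∈ s, G.Adj x y) ∧
    (s : Set V).Pairwise fun y z => ¬ G.Adj y z

/-- `θ` is an eigenvalue of the (real) adjacency matrix of `G`. -/
def IsAdjEigenvalue {V : Type*} [Fintype V] (G : SimpleGraph V) [DecidableRel G.Adj]
    (θ : ℝ) : Prop :=
  ∃ v : V → ℝ, v ≠ 0 ∧ (G.adjMatrix ℝ).mulVec v = θ • v

/-- `G` contains an induced quadrangle: vertices `x, z₁, y, z₂` with
`dist x y = dist z₁ z₂ = 2` inducing a 4-cycle. -/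
def HasQuadrangle {V : Type*} (G : SimpleGraph V) : Prop :=
  ∃ x z₁ y z₂ : V, G.dist x y = 2 ∧ G.dist z₁ z₂ = 2 ∧
    G.Adj x z₁ ∧ G.Adj z₁ y ∧ G.Adj y z₂ ∧ G.Adj z₂ x

/-- The diameter-3 intersection array `{β₀,β₁,β₂; γ₁,γ₂,γ₃}`. -/
def arr3 (b c : ℕ → ℕ) (β₀ β₁ β₂ γ₁ γ₂ γ₃ : ℕ) : Prop :=
  b 0 = β₀ ∧ b 1 = β₁ ∧ b 2 = β₂ ∧ c 1 = γ₁ ∧ c 2 = γ₂ ∧ c 3 = γ₃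

/-- The second Bonferroni inequality `∑ |A y| - ∑_{y < z} |A y ∩ A z| ≤ |N|` for subsets
`A y = {w ∈ N | R w y}` of `N`, multiplied by two so that the pairs may be taken ordered. With
`d w` the number of `y` such that `w ∈ A y`, it is the sum over `w` of `2 d - 2 ≤ d (d - 1)`. -/
theorem bonferroni_two {V : Type*} [DecidableEq V] (N s : Finset V) (R : V → V → Prop)
    [DecidableRel R] :
    2 * (∑ y ∈ s, ((N.filter fun w => R w y).card : ℤ)) - 2 * (N.card : ℤ) ≤
      ∑ p ∈ s.offDiag, ((N.filter fun w => R w p.1 ∧ R w p.2).card : ℤ) := by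
  have h1 : ∑ y ∈ s, ((N.filter fun w => R w y).card : ℤ) =
      ∑ w ∈ N, ((s.filter fun y => R w y).card : ℤ) := by
    simp only [Finset.card_filter, Nat.cast_sum]
    exact Finset.sum_comm
  have h2 : ∑ p ∈ s.offDiag, ((N.filter fun w => R w p.1 ∧ R w p.2).card : ℤ) =
      ∑ w ∈ N, ((s.offDiag.filter fun p => R w p.1 ∧ R w p.2).card : ℤ) := by
    simp only [Finset.card_filter, Nat.cast_sum]
    exact Finset.sum_comm
  have h3 : ∀ w, ((s.offDiag.filter fun p => R w p.1 ∧ R w p.2).card : ℤ) =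
      ((s.filter fun y => R w y).card : ℤ) * (s.filter fun y => R w y).card
        - (s.filter fun y => R w y).card := by
    intro w
    have : (s.offDiag.filter fun p => R w p.1 ∧ R w p.2) = (s.filter fun y => R w y).offDiag := by
      ext ⟨p, q⟩
      simp only [Finset.mem_filter, Finset.mem_offDiag]
      tauto
    rw [this, Finset.offDiag_card, Nat.cast_sub (Nat.le_mul_self _), Nat.cast_mul]
  rw [h1, h2, Finset.mul_sum, Finset.card_eq_sum_ones, Nat.cast_sum, Finset.mul_sum,
    ← Finset.sum_sub_distrib]
  refine Finset.sum_le_sum fun w _ => ?_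
  rw [h3]
  generalize (s.filter fun y => R w y).card = d
  -- The difference of the two sides is `(d - 1) (d - 2)`, nonnegative at integers.
  rcases Nat.lt_or_ge d 2 with h | h
  · interval_cases d <;> norm_num
  · have h' : (2 : ℤ) ≤ d := by exact_mod_cast h
    push_cast
    nlinarith

theorem IsDRG.card_nbrs {V : Type*} [Fintype V] [DecidableEq V] {G : SimpleGraph V}
    [DecidableRel G.Adj] {D : ℕ} {b c : ℕ → ℕ} (h : IsDRG G D b c) (x : V) :
    (Finset.univ.filter fun w => G.Adj x w).card = b 0 := by
  obtain ⟨-, -, -, -, -, -, h⟩ := h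
  rw [← (h 0 (Nat.zero_le _) x x (by simp)).2, ← Set.ncard_coe_finset]
  congr 1
  ext w
  simp only [Finset.coe_filter, Finset.mem_univ, true_and, Set.mem_setOf_eq, zero_add,
    SimpleGraph.dist_eq_one_iff_adj, and_self]

/-- A closed neighbourhood inside `N(x)` has `a₁ + 1` elements: the neighbours of `y` are split
by their distance `0`, `1` or `2` to `x`. -/
theorem IsDRG.card_closedNbrs {V : Type*} [Fintype V] [DecidableEq V] {G : SimpleGraph V}
    [DecidableRel G.Adj] {D : ℕ} {b c : ℕ → ℕ} (h : IsDRG G D b c) (hD : 2 ≤ D) {x y : V}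
    (hxy : G.Adj x y) :
    (((Finset.univ.filter fun w => G.Adj x w).filter fun w => w = y ∨ G.Adj w y).card : ℤ) =
      (b 0 : ℤ) - b 1 - c 1 + 1 := by
  have hk := h.card_nbrs y
  obtain ⟨hconn, -, -, -, -, -, h⟩ := h
  obtain ⟨hc, hb⟩ := h 1 (by omega) x y (SimpleGraph.dist_eq_one_iff_adj.2 hxy)
  have hc' : (Finset.univ.filter fun w => G.Adj y w ∧ G.dist x w = 0).card = c 1 := by
    rw [← hc, ← Set.ncard_coe_finset]; simp
  have hb' : (Finset.univ.filter fun w => G.Adj y w ∧ G.dist x w = 2).card = b 1 := by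
    rw [← hb, ← Set.ncard_coe_finset]; simp
  have hA : (Finset.univ.filter fun w => G.Adj x w).filter (fun w => w = y ∨ G.Adj w y) =
      insert y (Finset.univ.filter fun w => G.Adj y w ∧ G.dist x w = 1) := by
    ext w
    simp only [Finset.mem_filter, Finset.mem_univ, true_and, Finset.mem_insert,
      SimpleGraph.dist_eq_one_iff_adj, G.adj_comm w y]
    constructor
    · tauto
    · rintro (rfl | h)
      · exact ⟨hxy, Or.inl rfl⟩
      · tauto
  have hsplit : (Finset.univ.filter fun w => G.Adj y w) =
      ((Finset.univ.filter fun w => G.Adj y w ∧ G.dist x w = 0) ∪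
        (Finset.univ.filter fun w => G.Adj y w ∧ G.dist x w = 1)) ∪
        (Finset.univ.filter fun w => G.Adj y w ∧ G.dist x w = 2) := by
    ext w
    simp only [Finset.mem_filter, Finset.mem_univ, true_and, Finset.mem_union]
    constructor
    · intro hw
      have h1 := hconn.dist_triangle (u := x) (v := y) (w := w)
      rw [SimpleGraph.dist_eq_one_iff_adj.2 hxy, SimpleGraph.dist_eq_one_iff_adj.2 hw] at h1
      simp only [hw, true_and]
      omega
    · tauto
  rw [hsplit, Finset.card_union_of_disjoint, Finset.card_union_of_disjoint, hc', hb'] at hk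
  · rw [hA, Finset.card_insert_of_notMem (by simp)]
    push_cast
    omega
  all_goals
    rw [Finset.disjoint_left]
    intro w
    simp only [Finset.mem_filter, Finset.mem_univ, true_and, Finset.mem_union]
    omega

/-- Closed neighbourhoods of two distinct leaves `y`, `z` inside `N(x)` meet in common neighbours
of `y` and `z` other than `x`. -/
theorem IsDRG.card_inter_closedNbrs {V : Type*} [Fintype V] [DecidableEq V] {G : SimpleGraph V}
    [DecidableRel G.Adj] {D : ℕ} {b c : ℕ → ℕ} (h : IsDRG G D b c) (hD : 2 ≤ D) {x y z : V}
    (hxy : G.Adj x y) (hxz : G.Adj x z) (hne : y ≠ z) (hyz : ¬ G.Adj y z) :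
    (((Finset.univ.filter fun w => G.Adj x w).filter fun w =>
      (w = y ∨ G.Adj w y) ∧ (w = z ∨ G.Adj w z)).card : ℤ) ≤ (c 2 : ℤ) - 1 := by
  obtain ⟨hconn, -, -, -, -, -, h⟩ := h
  have hdist : G.dist y z = 2 := by
    have h1 := hconn.dist_triangle (u := y) (v := x) (w := z)
    rw [SimpleGraph.dist_eq_one_iff_adj.2 hxy.symm, SimpleGraph.dist_eq_one_iff_adj.2 hxz] at h1
    have h2 : G.dist y z ≠ 1 := fun e => hyz (SimpleGraph.dist_eq_one_iff_adj.1 e)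
    have h3 := hconn.pos_dist_of_ne hne
    omega
  have hc := (h 2 hD y z hdist).1
  have hc' : (Finset.univ.filter fun w => G.Adj z w ∧ G.Adj y w).card = c 2 := by
    rw [← hc, ← Set.ncard_coe_finset]
    simp [SimpleGraph.dist_eq_one_iff_adj]
  have hlt : ((Finset.univ.filter fun w => G.Adj x w).filter fun w =>
      (w = y ∨ G.Adj w y) ∧ (w = z ∨ G.Adj w z)).card < c 2 := by
    rw [← hc']
    refine Finset.card_lt_card (Finset.ssubset_iff_of_subset ?_ |>.2
      ⟨x, by simp [hxy.symm, hxz.symm], by simp⟩)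
    intro w
    simp only [Finset.mem_filter, Finset.mem_univ, true_and]
    rintro ⟨-, rfl | h1, rfl | h2⟩
    · exact absurd rfl hne
    · exact absurd h2 hyz
    · exact absurd h1.symm hyz
    · exact ⟨h2.symm, h1.symm⟩
  omega

/-- a DRG with a `t`-claw but no `(t+1)`-claws (`t ≥ 3`) satisfies
`t(t-1)(c₂ - 1) ≥ 2(t(a₁+1) - k)` (here `a₁ = k - b₁ - c₁`). -/
theorem statement4 {V : Type*} [Fintype V] (G : SimpleGraph V) (D : ℕ) (b c : ℕ → ℕ)
    (t : ℕ) (hdrg : IsDRG G D b c) (hD : 2 ≤ D) (ht : 3 ≤ t)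
    (hclaw : HasClaw G t) (hclaw' : ¬ HasClaw G (t + 1)) :
    2 * ((t : ℤ) * (((b 0 : ℤ) - b 1 - c 1) + 1) - (b 0 : ℤ)) ≤
      (t : ℤ) * ((t : ℤ) - 1) * ((c 2 : ℤ) - 1) := by
  classical
  obtain ⟨x, s, hcard, hadj, hpair⟩ := hclaw
  have hB := bonferroni_two (Finset.univ.filter fun w => G.Adj x w) s
    (fun w y => w = y ∨ G.Adj w y)
  rw [Finset.sum_congr rfl fun y hy => hdrg.card_closedNbrs hD (hadj y hy), Finset.sum_const,
    hdrg.card_nbrs, hcard, nsmul_eq_mul] at hB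
  have hpairs := Finset.sum_le_card_nsmul s.offDiag (fun p =>
    (((Finset.univ.filter fun w => G.Adj x w).filter fun w =>
      (w = p.1 ∨ G.Adj w p.1) ∧ (w = p.2 ∨ G.Adj w p.2)).card : ℤ)) ((c 2 : ℤ) - 1) (by
    rintro ⟨y, z⟩ hp
    obtain ⟨hy, hz, hne⟩ := Finset.mem_offDiag.1 hp
    exact hdrg.card_inter_closedNbrs hD (hadj y hy) (hadj z hz) hne (hpair hy hz hne))
  rw [Finset.offDiag_card, hcard, nsmul_eq_mul, Nat.cast_sub (Nat.le_mul_self _),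
    Nat.cast_mul] at hpairs
  calc _ ≤ _ := by rw [mul_sub]; exact hB
    _ ≤ _ := hpairs
    _ = _ := by ring
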